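/- arXiv:2002.01504 — 3 statements merged into one kernel-verified Lean document; each statement's English description precedes it below -/
import Mathlib

section
/- (Weighted-value bound, steps (b)–(d) in the proof of Theorem 1.) Under the IRLS setup, Σ_{m=1}^M Δ_m · (t_m(ρ') + ε²)^{p̃/2 − 1} · t_m(ρ'') ≤ Σ_{m=1}^M Δ_m · t_m(ρ')^{p̃/2}. -/
open Finset

/-- Total transmit power `t_m(ρ) = Σ_k ρ_{mk}` of AP `m` (the squared norm `‖ρ_m‖²`
in the paper's square-root parametrization). -/
noncomputable def totPow {M K : ℕ} (ρ : Fin M → Fin K → ℝ) (m : Fin M) : ℝ :=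
  ∑ k : Fin K, ρ m k

theorem add_rpow_sub_one_mul_le_rpow {t δ q : ℝ} (ht : 0 ≤ t) (hδ : 0 ≤ δ) (hq : q ≤ 1) :
    (t + δ) ^ (q - 1) * t ≤ t ^ q := by
  -- Monotonicity in the base needs `0 < t`: Lean's `0 ^ (q - 1)` is `0` for `q < 1`, not `+∞`.
  rcases ht.eq_or_lt with rfl | hpos
  · simpa only [mul_zero] using Real.rpow_nonneg le_rfl q
  · calc (t + δ) ^ (q - 1) * t
        ≤ t ^ (q - 1) * t := by
          gcongr ?_ * t
          exact Real.rpow_le_rpow_of_nonpos hpos (le_add_of_nonneg_right hδ) (sub_nonpos.2 hq)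
      _ = t ^ q := by rw [Real.rpow_sub_one hpos.ne', div_mul_cancel₀ _ hpos.ne']

section WeightedSums

variable {ι : Type*} {s : Finset ι} {Δ t : ι → ℝ} {δ : ℝ}

theorem sum_mul_add_rpow_sub_one_mul_le_sum_mul_rpow {q : ℝ} (hΔ : ∀ i ∈ s, 0 ≤ Δ i)
    (ht : ∀ i ∈ s, 0 ≤ t i) (hδ : 0 ≤ δ) (hq : q ≤ 1) :
    ∑ i ∈ s, Δ i * (t i + δ) ^ (q - 1) * t i ≤ ∑ i ∈ s, Δ i * t i ^ q := by
  refine sum_le_sum fun i hi => ?_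
  rw [mul_assoc]
  exact mul_le_mul_of_nonneg_left (add_rpow_sub_one_mul_le_rpow (ht i hi) hδ hq) (hΔ i hi)

/-- `t` and `u` are the total powers of the current and of the next iterate, and `δ` is the squared
damping constant. -/
theorem irls_weighted_value_bound_general {u : ι → ℝ} {p : ℝ} (hΔ : ∀ i ∈ s, 0 ≤ Δ i)
    (ht : ∀ i ∈ s, 0 ≤ t i) (hp0 : 0 < p) (hp2 : p ≤ 2) (hδ : 0 < δ)
    (hdescent : ∑ i ∈ s, (Δ i * p / 2) * (t i + δ) ^ (p / 2 - 1) * u i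
      ≤ ∑ i ∈ s, (Δ i * p / 2) * (t i + δ) ^ (p / 2 - 1) * t i) :
    ∑ i ∈ s, Δ i * (t i + δ) ^ (p / 2 - 1) * u i ≤ ∑ i ∈ s, Δ i * t i ^ (p / 2) := by
  have factor_out (v : ι → ℝ) :
      ∑ i ∈ s, (Δ i * p / 2) * (t i + δ) ^ (p / 2 - 1) * v i
        = p / 2 * ∑ i ∈ s, Δ i * (t i + δ) ^ (p / 2 - 1) * v i := by
    rw [mul_sum]
    exact sum_congr rfl fun i _ => by ring
  rw [factor_out, factor_out] at hdescent
  calc ∑ i ∈ s, Δ i * (t i + δ) ^ (p / 2 - 1) * u i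
      ≤ ∑ i ∈ s, Δ i * (t i + δ) ^ (p / 2 - 1) * t i :=
        le_of_mul_le_mul_left hdescent (half_pos hp0)
    _ ≤ ∑ i ∈ s, Δ i * t i ^ (p / 2) :=
        sum_mul_add_rpow_sub_one_mul_le_sum_mul_rpow hΔ ht hδ.le (by linarith)

end WeightedSums

theorem totPow_nonneg {M K : ℕ} {ρ : Fin M → Fin K → ℝ} {m : Fin M} (hρ : ∀ k, 0 ≤ ρ m k) :
    0 ≤ totPow ρ m :=
  sum_nonneg fun k _ => hρ k

/-- **steps (b)–(d) in the proof of Theorem 1.** If `ρ''` minimizes the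
weighted objective with weights `a_m = (Δ_m p̃/2)(t_m(ρ') + ε²)^{p̃/2−1}` over the feasible
set `F ∋ ρ'`, then `Σ_m Δ_m (t_m(ρ') + ε²)^{p̃/2−1} t_m(ρ'') ≤ Σ_m Δ_m t_m(ρ')^{p̃/2}`. -/
theorem irls_weighted_value_bound (M K : ℕ) (hM : 1 ≤ M) (hK : 1 ≤ K)
    (Δ : Fin M → ℝ) (hΔ : ∀ m, 0 < Δ m) (p ε : ℝ)
    (hp0 : 0 < p) (hp2 : p < 2) (hε : 0 < ε)
    (F : Set (Fin M → Fin K → ℝ)) (hFnn : ∀ ρ ∈ F, ∀ m k, 0 ≤ ρ m k)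
    (ρ' ρ'' : Fin M → Fin K → ℝ) (hρ' : ρ' ∈ F) (hρ'' : ρ'' ∈ F)
    (hmin : ∀ ρ ∈ F,
      ∑ m : Fin M, (Δ m * p / 2) * (totPow ρ' m + ε ^ 2) ^ (p / 2 - 1) * totPow ρ'' m
        ≤ ∑ m : Fin M, (Δ m * p / 2) * (totPow ρ' m + ε ^ 2) ^ (p / 2 - 1) * totPow ρ m) :
    ∑ m : Fin M, Δ m * (totPow ρ' m + ε ^ 2) ^ (p / 2 - 1) * totPow ρ'' m
      ≤ ∑ m : Fin M, Δ m * (totPow ρ' m) ^ (p / 2) :=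
  irls_weighted_value_bound_general (fun m _ => (hΔ m).le)
    (fun m _ => totPow_nonneg (hFnn ρ' hρ' m)) hp0 hp2.le (pow_pos hε 2) (hmin ρ' hρ')
end

section
/- (Theorem 1, property 1: monotone decrease of the smoothed objective.) Under the IRLS setup, for any ε' with 0 ≤ ε' ≤ ε (the weights a_m being computed with ε): Σ_{m=1}^M Δ_m (t_m(ρ'') + ε'²)^{p̃/2} ≤ Σ_{m=1}^M Δ_m (t_m(ρ') + ε²)^{p̃/2}. In particular, with nonincreasing damping constants ε_n ≤ ε_{n−1}, the smoothed ℓp̃ objective of the iteratively reweighted least squares scheme is nonincreasing along the iterations. -/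
open Finset

theorem rpow_le_rpow_add_mul_sub {x y q : ℝ} (hx : 0 < x) (hy : 0 ≤ y) (hq0 : 0 ≤ q)
    (hq1 : q ≤ 1) : y ^ q ≤ x ^ q + q * x ^ (q - 1) * (y - x) := by
  have bernoulli : (1 + (y / x - 1)) ^ q ≤ 1 + q * (y / x - 1) :=
    rpow_one_add_le_one_add_mul_self (by linarith [div_nonneg hy hx.le]) hq0 hq1
  calc y ^ q = x ^ q * (1 + (y / x - 1)) ^ q := by
        rw [add_sub_cancel, ← Real.mul_rpow hx.le (div_nonneg hy hx.le), mul_div_cancel₀ y hx.ne']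
    _ ≤ x ^ q * (1 + q * (y / x - 1)) := by gcongr
    _ = x ^ q + q * x ^ (q - 1) * (y - x) := by
        rw [Real.rpow_sub_one hx.ne']
        field_simp

section IRLS

variable {ι : Type*}

/-- The IRLS weights `(Δ_m p / 2) (t_m + ε²) ^ (p / 2 - 1)` at the current powers `t`. -/
noncomputable def irlsWeight (Δ : ι → ℝ) (p ε : ℝ) (t : ι → ℝ) (m : ι) : ℝ :=
  (Δ m * p / 2) * (t m + ε ^ 2) ^ (p / 2 - 1)

/-- The `ℓp` objective smoothed by the damping constant `ε`. It is a function of the total powers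
`t m` (squared norms), hence the exponent `p / 2`. -/
noncomputable def smoothedObjective [Fintype ι] (Δ : ι → ℝ) (p ε : ℝ) (t : ι → ℝ) : ℝ :=
  ∑ m, Δ m * (t m + ε ^ 2) ^ (p / 2)

variable [Fintype ι] {Δ t t' : ι → ℝ} {p ε ε' : ℝ}

theorem smoothedObjective_le_of_damping_le (hΔ : ∀ m, 0 ≤ Δ m) (hp : 0 ≤ p) (ht : ∀ m, 0 ≤ t m)
    (hε' : 0 ≤ ε') (hε'ε : ε' ≤ ε) :
    smoothedObjective Δ p ε' t ≤ smoothedObjective Δ p ε t := by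
  refine sum_le_sum fun m _ => mul_le_mul_of_nonneg_left ?_ (hΔ m)
  have := ht m
  gcongr

theorem smoothedObjective_le_add_sum_irlsWeight_mul_sub (hΔ : ∀ m, 0 ≤ Δ m) (hp0 : 0 ≤ p)
    (hp2 : p ≤ 2) (hε : ε ≠ 0) (ht : ∀ m, 0 ≤ t m) (ht' : ∀ m, 0 ≤ t' m) :
    smoothedObjective Δ p ε t' ≤
      smoothedObjective Δ p ε t + ∑ m, irlsWeight Δ p ε t m * (t' m - t m) := by
  unfold smoothedObjective irlsWeight
  rw [← sum_add_distrib]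
  refine sum_le_sum fun m _ => ?_
  have hx : 0 < t m + ε ^ 2 := add_pos_of_nonneg_of_pos (ht m) (sq_pos_of_ne_zero hε)
  have hy : 0 ≤ t' m + ε ^ 2 := add_nonneg (ht' m) (sq_nonneg ε)
  calc Δ m * (t' m + ε ^ 2) ^ (p / 2)
      ≤ Δ m * ((t m + ε ^ 2) ^ (p / 2) + p / 2 * (t m + ε ^ 2) ^ (p / 2 - 1) *
          (t' m + ε ^ 2 - (t m + ε ^ 2))) :=
        mul_le_mul_of_nonneg_left
          (rpow_le_rpow_add_mul_sub hx hy (by linarith) (by linarith)) (hΔ m)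
    _ = Δ m * (t m + ε ^ 2) ^ (p / 2) +
          Δ m * p / 2 * (t m + ε ^ 2) ^ (p / 2 - 1) * (t' m - t m) := by ring

theorem irls_smoothed_objective_decrease_general (hΔ : ∀ m, 0 ≤ Δ m) (hp0 : 0 ≤ p) (hp2 : p ≤ 2)
    (hε : 0 < ε) (ht : ∀ m, 0 ≤ t m) (ht' : ∀ m, 0 ≤ t' m)
    (hweighted : ∑ m, irlsWeight Δ p ε t m * t' m ≤ ∑ m, irlsWeight Δ p ε t m * t m)
    (hε' : 0 ≤ ε') (hε'ε : ε' ≤ ε) :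
    smoothedObjective Δ p ε' t' ≤ smoothedObjective Δ p ε t := by
  have hdescent : ∑ m, irlsWeight Δ p ε t m * (t' m - t m) ≤ 0 := by
    simpa only [mul_sub, sum_sub_distrib, sub_nonpos] using hweighted
  calc smoothedObjective Δ p ε' t' ≤ smoothedObjective Δ p ε t' :=
        smoothedObjective_le_of_damping_le hΔ hp0 ht' hε' hε'ε
    _ ≤ smoothedObjective Δ p ε t + ∑ m, irlsWeight Δ p ε t m * (t' m - t m) :=
        smoothedObjective_le_add_sum_irlsWeight_mul_sub hΔ hp0 hp2 hε.ne' ht ht'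
    _ ≤ smoothedObjective Δ p ε t := add_le_of_nonpos_right hdescent

end IRLS

/-- **Theorem 1, property 1: monotone decrease.** One IRLS step with
weights `a_m = (Δ_m p̃/2)(t_m(ρ') + ε²)^{p̃/2−1}` does not increase the smoothed ℓp̃
objective, for any new damping constant `ε'` with `0 ≤ ε' ≤ ε`. -/
theorem irls_smoothed_objective_decrease (M K : ℕ) (hM : 1 ≤ M) (hK : 1 ≤ K)
    (Δ : Fin M → ℝ) (hΔ : ∀ m, 0 < Δ m) (p ε : ℝ)
    (hp0 : 0 < p) (hp2 : p < 2) (hε : 0 < ε)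
    (F : Set (Fin M → Fin K → ℝ)) (hFnn : ∀ ρ ∈ F, ∀ m k, 0 ≤ ρ m k)
    (ρ' ρ'' : Fin M → Fin K → ℝ) (hρ' : ρ' ∈ F) (hρ'' : ρ'' ∈ F)
    (hmin : ∀ ρ ∈ F,
      ∑ m : Fin M, (Δ m * p / 2) * (totPow ρ' m + ε ^ 2) ^ (p / 2 - 1) * totPow ρ'' m
        ≤ ∑ m : Fin M, (Δ m * p / 2) * (totPow ρ' m + ε ^ 2) ^ (p / 2 - 1) * totPow ρ m)
    (ε' : ℝ) (hε'0 : 0 ≤ ε') (hε'ε : ε' ≤ ε) :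
    ∑ m : Fin M, Δ m * (totPow ρ'' m + ε' ^ 2) ^ (p / 2)
      ≤ ∑ m : Fin M, Δ m * (totPow ρ' m + ε ^ 2) ^ (p / 2) :=
  irls_smoothed_objective_decrease_general (fun m => (hΔ m).le) hp0.le hp2.le hε
    (fun m => totPow_nonneg (hFnn ρ' hρ' m)) (fun m => totPow_nonneg (hFnn ρ'' hρ'' m))
    (hmin ρ' hρ') hε'0 hε'ε
end

section
/- (Inequality (37) in the proof of Theorem 1.) Under the IRLS setup, for every index m' ∈ {1,…,M}: Δ_{m'} · t_{m'}(ρ'') ≤ (t_{m'}(ρ') + ε²)^{1 − p̃/2} · Σ_{m=1}^M Δ_m · t_m(ρ')^{p̃/2}. -/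
open Finset

theorem sum_mul_add_rpow_sub_one_mul_le {ι : Type*} (S : Finset ι) {Δ t : ι → ℝ} {δ q : ℝ}
    (hΔ : ∀ i ∈ S, 0 ≤ Δ i) (ht : ∀ i ∈ S, 0 ≤ t i) (hδ : 0 ≤ δ) (hq : q ≤ 1) :
    ∑ i ∈ S, Δ i * (t i + δ) ^ (q - 1) * t i ≤ ∑ i ∈ S, Δ i * t i ^ q := by
  refine sum_le_sum fun i hi => ?_
  rw [mul_assoc]
  exact mul_le_mul_of_nonneg_left (add_rpow_sub_one_mul_le_rpow (ht i hi) hδ hq) (hΔ i hi)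

-- The scale `c` absorbs the factor `p̃ / 2` of the weights; minimizers do not depend on it.
theorem irls_per_ap_power_bound_general {ι : Type*} [Fintype ι] {a Δ t s : ι → ℝ} {c δ q : ℝ}
    (hc : 0 < c) (hq : q ≤ 1) (hδ : 0 < δ) (hΔ : ∀ i, 0 ≤ Δ i) (ht : ∀ i, 0 ≤ t i)
    (hs : ∀ i, 0 ≤ s i) (ha : ∀ i, a i = c * (Δ i * (t i + δ) ^ (q - 1)))
    (hdescent : ∑ i, a i * s i ≤ ∑ i, a i * t i) (i : ι) :
    Δ i * s i ≤ (t i + δ) ^ (1 - q) * ∑ j, Δ j * t j ^ q := by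
  have hpos (j : ι) : 0 < t j + δ := add_pos_of_nonneg_of_pos (ht j) hδ
  have hweighted : ∑ j, Δ j * (t j + δ) ^ (q - 1) * s j
      ≤ ∑ j, Δ j * (t j + δ) ^ (q - 1) * t j := by
    simp only [ha, mul_assoc c, ← mul_sum] at hdescent
    exact le_of_mul_le_mul_left hdescent hc
  have hterm (j : ι) : 0 ≤ Δ j * (t j + δ) ^ (q - 1) * s j :=
    mul_nonneg (mul_nonneg (hΔ j) (Real.rpow_nonneg (hpos j).le _)) (hs j)
  have hdamped : Δ i * (t i + δ) ^ (q - 1) * s i ≤ ∑ j, Δ j * t j ^ q :=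
    calc Δ i * (t i + δ) ^ (q - 1) * s i
        ≤ ∑ j, Δ j * (t j + δ) ^ (q - 1) * s j :=
          single_le_sum (f := fun j => Δ j * (t j + δ) ^ (q - 1) * s j)
            (fun j _ => hterm j) (mem_univ i)
      _ ≤ ∑ j, Δ j * (t j + δ) ^ (q - 1) * t j := hweighted
      _ ≤ ∑ j, Δ j * t j ^ q :=
          sum_mul_add_rpow_sub_one_mul_le univ (fun j _ => hΔ j) (fun j _ => ht j) hδ.le hq
  rwa [mul_right_comm, ← neg_sub 1 q, Real.rpow_neg (hpos i).le, ← div_eq_mul_inv,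
    div_le_iff₀' (Real.rpow_pos_of_pos (hpos i) _)] at hdamped

/-- **inequality (37) in the proof of Theorem 1.** For every AP `m'`,
`Δ_{m'} t_{m'}(ρ'') ≤ (t_{m'}(ρ') + ε²)^{1 − p̃/2} · Σ_m Δ_m t_m(ρ')^{p̃/2}`. -/
theorem irls_per_ap_power_bound (M K : ℕ) (hM : 1 ≤ M) (hK : 1 ≤ K)
    (Δ : Fin M → ℝ) (hΔ : ∀ m, 0 < Δ m) (p ε : ℝ)
    (hp0 : 0 < p) (hp2 : p < 2) (hε : 0 < ε)
    (F : Set (Fin M → Fin K → ℝ)) (hFnn : ∀ ρ ∈ F, ∀ m k, 0 ≤ ρ m k)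
    (ρ' ρ'' : Fin M → Fin K → ℝ) (hρ' : ρ' ∈ F) (hρ'' : ρ'' ∈ F)
    (hmin : ∀ ρ ∈ F,
      ∑ m : Fin M, (Δ m * p / 2) * (totPow ρ' m + ε ^ 2) ^ (p / 2 - 1) * totPow ρ'' m
        ≤ ∑ m : Fin M, (Δ m * p / 2) * (totPow ρ' m + ε ^ 2) ^ (p / 2 - 1) * totPow ρ m) :
    ∀ m' : Fin M, Δ m' * totPow ρ'' m'
      ≤ (totPow ρ' m' + ε ^ 2) ^ (1 - p / 2)
          * ∑ m : Fin M, Δ m * (totPow ρ' m) ^ (p / 2) :=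
  irls_per_ap_power_bound_general (half_pos hp0) (by linarith) (pow_pos hε 2)
    (fun m => (hΔ m).le) (fun m => totPow_nonneg (hFnn ρ' hρ' m))
    (fun m => totPow_nonneg (hFnn ρ'' hρ'' m)) (fun m => by ring) (hmin ρ' hρ')
end
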